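/- Let p, q, r be distinct primes. Then K(C_p ⊕ C_q ⊕ C_r) = 3 − 1/p − 1/q − 1/r + 1/(pqr). -/

import Mathlib

/-- The cross number `k(S)` of a sequence (finite multiset) `S` over an additive group:
the sum, with multiplicity, of the reciprocals of the orders of its elements. -/
noncomputable def crossNum {G : Type*} [AddCommGroup G] (S : Multiset G) : ℝ :=
  (S.map fun g => ((addOrderOf g : ℝ))⁻¹).sum

/-- `S` is zero-sum free: no nonempty sub-multiset of `S` has sum `0`. -/
def IsZeroSumFree {G : Type*} [AddCommGroup G] (S : Multiset G) : Prop :=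
  ∀ T : Multiset G, T ≤ S → T ≠ 0 → T.sum ≠ 0

/-- The little cross number `k(G)`: the maximal cross number of a zero-sum free
sequence over `G`. -/
noncomputable def littleK (G : Type*) [AddCommGroup G] : ℝ :=
  sSup {x : ℝ | ∃ S : Multiset G, IsZeroSumFree S ∧ crossNum S = x}

/-- `S` is a minimal zero-sum sequence: nonempty, sum zero, and no nonempty proper
sub-multiset has sum `0`. -/
def IsMinZeroSum {G : Type*} [AddCommGroup G] (S : Multiset G) : Prop :=
  S ≠ 0 ∧ S.sum = 0 ∧ ∀ T : Multiset G, T ≤ S → T ≠ 0 → T ≠ S → T.sum ≠ 0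

/-- The cross number `K(G)`: the maximal cross number of a minimal zero-sum
sequence over `G`. -/
noncomputable def bigK (G : Type*) [AddCommGroup G] : ℝ :=
  sSup {x : ℝ | ∃ S : Multiset G, IsMinZeroSum S ∧ crossNum S = x}

/-!
Let `S` be a minimal zero-sum sequence over a cyclic group of squarefree order `n`. Replacing some
elements of order `d` by their sum, one may assume that every order `d ≠ 1` occurs in `S` fewer
times than the smallest prime factor of `d`. If for some prime `p ∣ n` the order `p` occurs `p - 1`
times, then the subset sums of these elements fill the subgroup of order `p`, so the rest of `S`
remains minimal zero-sum modulo this subgroup, and induction applies to the quotient. Otherwise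
every prime order `p` occurs at most `p - 2` times, and counting orders suffices as soon as
`∑_{d ∣ n} (minFac d - 1) / d ≤ ω(n) + 1 / n`, which holds if `ω(n) ≤ 3`.
The bound is attained by `p - 1` copies of an element of order `p` for each prime `p ∣ n`, together
with the negative of their sum.
-/

open Multiset

section Multiset

variable {α β : Type*}

theorem exists_le_map_eq_of_le_map {f : α → β} {S : Multiset α} {T : Multiset β}
    (h : T ≤ S.map f) : ∃ S' ≤ S, S'.map f = T := by
  induction S, T using Quotient.inductionOn₂ with
  | h l t =>
    obtain ⟨u, hut, hu⟩ := h
    obtain ⟨l', hl', rfl⟩ := List.sublist_map_iff.mp hu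
    exact ⟨l', hl'.subperm, Quotient.sound hut⟩

theorem exists_le_le_add_eq_of_le_add {A B T : Multiset α} (h : T ≤ A + B) :
    ∃ A' ≤ A, ∃ B' ≤ B, A' + B' = T := by
  classical
  refine ⟨T ∩ A, inter_le_right, T - A, tsub_le_iff_left.mpr h, ?_⟩
  rw [add_comm, sub_add_inter]

end Multiset

section ZeroSum

variable {G H : Type*} [AddCommGroup G] [AddCommGroup H] {S T U V : Multiset G}

-- Two of the `|C| + 1` prefix sums coincide; the block between them is the required sequence.
theorem exists_le_sum_map_eq_zero {ι : Type*} (f : ι → G) (C : AddSubgroup G) [Finite C]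
    {S : Multiset ι} (hS : ∀ i ∈ S, f i ∈ C) (hcard : Nat.card C ≤ card S) :
    ∃ T ≤ S, T ≠ 0 ∧ card T ≤ Nat.card C ∧ (T.map f).sum = 0 := by
  induction S using Quotient.inductionOn with
  | h l =>
  have hC := Fintype.ofFinite C
  let prefixSum (i : Fin (Nat.card C + 1)) : C :=
    ⟨((l.take i).map f).sum, list_sum_mem fun x hx => by
      obtain ⟨i, hi, rfl⟩ := List.mem_map.mp hx
      exact hS i (List.mem_of_mem_take hi)⟩
  obtain ⟨i, j, hij, heq⟩ := Fintype.exists_ne_map_eq_of_card_lt prefixSum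
    (by simp [Nat.card_eq_fintype_card])
  wlog hlt : i < j generalizing i j
  · exact this j i hij.symm heq.symm (hij.lt_or_gt.resolve_left hlt)
  have hj : (j : ℕ) ≤ l.length := (Nat.le_of_lt_succ j.2).trans hcard
  have hlt' : (i : ℕ) < j := hlt
  refine ⟨((l.take j).drop i : List ι), ?_, ?_, ?_, ?_⟩
  · exact ((List.drop_sublist _ _).trans (List.take_sublist _ _)).subperm
  · rw [Ne, ← card_eq_zero, coe_card, List.length_drop, List.length_take]
    omega
  · rw [coe_card, List.length_drop, List.length_take]
    omega
  · have hsplit := List.sum_take_add_sum_drop ((l.take j).map f) i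
    rw [← List.map_take, List.take_take, min_eq_left hlt'.le, ← List.map_drop] at hsplit
    rw [map_coe, sum_coe]
    exact add_eq_left.mp (hsplit.trans (congrArg Subtype.val heq).symm)

theorem IsZeroSumFree.card_lt_natCard (hS : IsZeroSumFree S) (C : AddSubgroup G) [Finite C]
    (hC : ∀ g ∈ S, g ∈ C) : card S < Nat.card C := by
  by_contra! hcard
  obtain ⟨T, hT, hT0, -, hsum⟩ := exists_le_sum_map_eq_zero id C hC hcard
  exact hS T hT hT0 (by simpa using hsum)

theorem IsZeroSumFree.exists_le_sum_eq (hS : IsZeroSumFree S) (C : AddSubgroup G) [Finite C]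
    (hC : ∀ g ∈ S, g ∈ C) (hcard : Nat.card C ≤ card S + 1) {a : G} (ha : a ∈ C) :
    ∃ T ≤ S, T.sum = a := by
  have hC' : ∀ g ∈ -a ::ₘ S, g ∈ C := by simpa [ha] using hC
  obtain ⟨T, hT, hT0, -, hsum⟩ := exists_le_sum_map_eq_zero id C hC' (by simpa using hcard)
  rw [map_id] at hsum
  by_cases hmem : -a ∈ T
  · obtain ⟨R, rfl⟩ := exists_cons_of_mem hmem
    refine ⟨R, (cons_le_cons_iff _).mp hT, ?_⟩
    rwa [sum_cons, neg_add_eq_zero, eq_comm] at hsum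
  · exact absurd hsum (hS T ((le_cons_of_notMem hmem).mp hT) hT0)

theorem IsZeroSumFree.isMinZeroSum_cons_neg_sum (hS : IsZeroSumFree S) :
    IsMinZeroSum (-S.sum ::ₘ S) := by
  refine ⟨cons_ne_zero, by simp, fun T hT hT0 hTS hsum => ?_⟩
  by_cases hmem : -S.sum ∈ T
  · obtain ⟨R, rfl⟩ := exists_cons_of_mem hmem
    obtain ⟨R', rfl⟩ := Multiset.le_iff_exists_add.mp ((cons_le_cons_iff _).mp hT)
    have hR' : R' ≠ 0 := fun h => hTS (by simp [h])
    refine hS R' (Multiset.le_add_left _ _) hR' ?_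
    simpa [neg_add_eq_zero] using hsum
  · exact hS T ((le_cons_of_notMem hmem).mp hT) hT0 hsum

theorem isZeroSumFree_replicate {g : G} {k : ℕ} (hk : k < addOrderOf g) :
    IsZeroSumFree (replicate k g) := by
  intro T hT hT0 hsum
  obtain ⟨i, hi, rfl⟩ := le_replicate_iff.mp hT
  rw [sum_replicate] at hsum
  have hi0 : i ≠ 0 := fun h => hT0 (by simp [h])
  exact absurd (Nat.le_of_dvd (Nat.pos_of_ne_zero hi0) (addOrderOf_dvd_of_nsmul_eq_zero hsum))
    (by omega)

theorem IsZeroSumFree.add_of_coprime (hS : IsZeroSumFree S) (hT : IsZeroSumFree T) {a b : ℕ}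
    (hab : a.Coprime b) (ha : ∀ g ∈ S, addOrderOf g ∣ a) (hb : ∀ g ∈ T, addOrderOf g ∣ b) :
    IsZeroSumFree (S + T) := by
  have nsmul_sum_eq_zero {k : ℕ} {R R' : Multiset G} (hR' : R' ≤ R)
      (hk : ∀ g ∈ R, addOrderOf g ∣ k) : k • R'.sum = 0 :=
    multiset_sum_mem (S := (nsmulAddMonoidHom k : G →+ G).ker) R' fun g hg =>
      addOrderOf_dvd_iff_nsmul_eq_zero.mp (hk g (mem_of_le hR' hg))
  intro R hR hR0 hsum
  obtain ⟨S', hS', T', hT', rfl⟩ := exists_le_le_add_eq_of_le_add hR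
  rw [sum_add] at hsum
  have hS'T' : S'.sum = -T'.sum := eq_neg_of_add_eq_zero_left hsum
  have hS'0 : S'.sum = 0 := by
    rw [← AddMonoid.addOrderOf_eq_one_iff]
    refine Nat.eq_one_of_dvd_coprimes hab
      (addOrderOf_dvd_of_nsmul_eq_zero (nsmul_sum_eq_zero hS' ha)) ?_
    rw [hS'T', addOrderOf_neg]
    exact addOrderOf_dvd_of_nsmul_eq_zero (nsmul_sum_eq_zero hT' hb)
  have hT'0 : T'.sum = 0 := by simpa [hS'0] using hsum
  by_cases h : S' = 0
  · exact hT T' hT' (fun h' => hR0 (by simp [h, h'])) hT'0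
  · exact hS S' hS' h hS'0

theorem isZeroSumFree_sum_replicate {ι : Type*} {s : Finset ι} {e : ι → G}
    (he : ∀ i ∈ s, addOrderOf (e i) ≠ 0)
    (hco : (s : Set ι).Pairwise fun i j => (addOrderOf (e i)).Coprime (addOrderOf (e j))) :
    IsZeroSumFree (∑ i ∈ s, replicate (addOrderOf (e i) - 1) (e i)) := by
  classical
  induction s using Finset.induction_on with
  | empty => exact fun T hT hT0 => absurd (Multiset.le_zero.mp hT) hT0
  | insert i s hi ih =>
    rw [Finset.coe_insert, Set.pairwise_insert] at hco
    rw [Finset.sum_insert hi]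
    have hi0 := he i (s.mem_insert_self i)
    refine (isZeroSumFree_replicate (by omega)).add_of_coprime
      (ih (fun j hj => he j (Finset.mem_insert_of_mem hj)) hco.1)
      (Nat.Coprime.prod_right fun j hj =>
        (hco.2 j hj (ne_of_mem_of_not_mem hj hi).symm).1) ?_ ?_
    · exact fun g hg => (eq_of_mem_replicate hg) ▸ dvd_rfl
    · intro g hg
      obtain ⟨j, hj, hgj⟩ := mem_sum.mp hg
      exact (eq_of_mem_replicate hgj) ▸ Finset.dvd_prod_of_mem (fun j => addOrderOf (e j)) hj

theorem IsMinZeroSum.eq_of_le (hS : IsMinZeroSum S) (hT : T ≤ S) (hT0 : T ≠ 0)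
    (hsum : T.sum = 0) : T = S := by
  by_contra hTS
  exact hS.2.2 T hT hT0 hTS hsum

theorem isMinZeroSum_singleton_zero : IsMinZeroSum ({0} : Multiset G) :=
  ⟨singleton_ne_zero 0, sum_singleton 0, fun T hT hT0 hT1 =>
    absurd (le_singleton.mp hT) (by simp [hT0, hT1])⟩

theorem IsMinZeroSum.eq_singleton_of_zero_mem (hS : IsMinZeroSum S) (h0 : (0 : G) ∈ S) :
    S = {0} :=
  (hS.eq_of_le (singleton_le.mpr h0) (singleton_ne_zero 0) (sum_singleton 0)).symm

theorem IsMinZeroSum.isZeroSumFree_of_lt (hS : IsMinZeroSum S) (hT : T < S) :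
    IsZeroSumFree T :=
  fun _ hR hR0 hsum => (hR.trans_lt hT).ne (hS.eq_of_le (hR.trans hT.le) hR0 hsum)

theorem IsMinZeroSum.card_le_natCard (hS : IsMinZeroSum S) (C : AddSubgroup G) [Finite C]
    (hC : ∀ g ∈ S, g ∈ C) : card S ≤ Nat.card C := by
  obtain ⟨g, hg⟩ := exists_mem_of_ne_zero hS.1
  obtain ⟨R, rfl⟩ := exists_cons_of_mem hg
  rw [card_cons]
  exact (hS.isZeroSumFree_of_lt (lt_cons_self R g)).card_lt_natCard C
    fun h hh => hC h (mem_cons_of_mem hh)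

theorem IsMinZeroSum.cons_sum (hS : IsMinZeroSum (T + U)) (hT0 : T ≠ 0) :
    IsMinZeroSum (T.sum ::ₘ U) := by
  refine ⟨cons_ne_zero, by simpa using hS.2.1, fun R hR hR0 hRne hsum => ?_⟩
  by_cases hmem : T.sum ∈ R
  · obtain ⟨R', rfl⟩ := exists_cons_of_mem hmem
    have hTR' : T + R' = T + U :=
      hS.eq_of_le (by gcongr; exact (cons_le_cons_iff _).mp hR) (by simp [hT0])
        (by simpa using hsum)
    exact hRne (by rw [add_left_cancel hTR'])
  · have hRU : R ≤ U := (le_cons_of_notMem hmem).mp hR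
    have hlt : U < T + U := lt_add_of_pos_left U (pos_iff_ne_zero.mpr hT0)
    exact hS.isZeroSumFree_of_lt hlt R hRU hR0 hsum

-- A proper zero-sum part of the image lifts to a part of `V` whose sum lies in the kernel, and
-- the missing sum is made up by elements of `U`.
theorem IsMinZeroSum.map_of_forall_mem_ker (φ : G →+ H) (hS : IsMinZeroSum (U + V))
    (hV0 : V ≠ 0) (hU : ∀ g ∈ U, g ∈ φ.ker) (hcover : ∀ a ∈ φ.ker, ∃ R ≤ U, R.sum = a) :
    IsMinZeroSum (V.map φ) := by
  refine ⟨by simpa using hV0, ?_, fun T' hT' hT'0 hT'V hsum => ?_⟩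
  · have hUsum : φ U.sum = 0 := multiset_sum_mem (S := φ.ker) U hU
    simpa [hUsum, map_multiset_sum] using congrArg φ hS.2.1
  · obtain ⟨T, hT, rfl⟩ := exists_le_map_eq_of_le_map hT'
    rw [← map_multiset_sum] at hsum
    obtain ⟨R, hR, hRsum⟩ := hcover (-T.sum) (neg_mem hsum)
    have hT0 : T ≠ 0 := fun h => hT'0 (by simp [h])
    have hRT : R + T = U + V :=
      hS.eq_of_le (add_le_add hR hT) (by simp [hT0]) (by rw [sum_add, hRsum, neg_add_cancel])
    have hTV : T = V := eq_of_le_of_card_le hT <| by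
      have := congrArg card hRT
      have := card_le_card hR
      simp only [card_add] at *
      omega
    exact hT'V (hTV ▸ rfl)

end ZeroSum

section CrossNum

variable {G H : Type*} [AddCommGroup G] [AddCommGroup H] {S T U V : Multiset G}

theorem crossNum_add (S T : Multiset G) : crossNum (S + T) = crossNum S + crossNum T := by
  simp [crossNum]

theorem crossNum_cons (g : G) (S : Multiset G) :
    crossNum (g ::ₘ S) = (addOrderOf g : ℝ)⁻¹ + crossNum S := by
  simp [crossNum]

theorem crossNum_singleton_zero : crossNum ({0} : Multiset G) = 1 := by
  simp [crossNum]

theorem crossNum_sum {ι : Type*} (s : Finset ι) (S : ι → Multiset G) :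
    crossNum (∑ i ∈ s, S i) = ∑ i ∈ s, crossNum (S i) :=
  map_sum (⟨⟨crossNum, by simp [crossNum]⟩, crossNum_add⟩ : Multiset G →+ ℝ) S s

theorem crossNum_eq_card_mul_inv {n : ℕ} (hS : ∀ g ∈ S, addOrderOf g = n) :
    crossNum S = card S * (n : ℝ)⁻¹ := by
  rw [crossNum, map_congr rfl fun g hg => by rw [hS g hg], map_const', sum_replicate,
    nsmul_eq_mul]

theorem crossNum_eq_sum_divisors [Finite G] (S : Multiset G) :
    crossNum S =
      ∑ d ∈ (Nat.card G).divisors, ((S.map addOrderOf).count d : ℝ) * (d : ℝ)⁻¹ := by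
  have hsub : (S.map addOrderOf).toFinset ⊆ (Nat.card G).divisors := by
    intro d hd
    obtain ⟨g, -, rfl⟩ := mem_map.mp (mem_toFinset.mp hd)
    exact Nat.mem_divisors.mpr ⟨addOrderOf_dvd_natCard g, Nat.card_pos.ne'⟩
  calc crossNum S = ((S.map addOrderOf).map fun d : ℕ => (d : ℝ)⁻¹).sum := by
        rw [crossNum, Multiset.map_map]; rfl
    _ = ∑ d ∈ (S.map addOrderOf).toFinset, ((S.map addOrderOf).count d : ℝ) * (d : ℝ)⁻¹ := by
        simp only [Finset.sum_multiset_map_count, nsmul_eq_mul]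
    _ = _ := Finset.sum_subset hsub fun d _ hd => by
        rw [count_eq_zero_of_notMem (mt mem_toFinset.mpr hd), Nat.cast_zero, zero_mul]

theorem inv_addOrderOf_le_inv_addOrderOf_map [Finite G] (φ : G →+ H) (g : G) :
    (addOrderOf g : ℝ)⁻¹ ≤ (addOrderOf (φ g) : ℝ)⁻¹ := by
  have hdvd : addOrderOf (φ g) ∣ addOrderOf g := addOrderOf_map_dvd φ g
  have := Nat.pos_of_dvd_of_pos hdvd (addOrderOf_pos g)
  gcongr
  exact Nat.le_of_dvd (addOrderOf_pos g) hdvd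

theorem crossNum_le_crossNum_map [Finite G] (φ : G →+ H) (S : Multiset G) :
    crossNum S ≤ crossNum (S.map φ) := by
  rw [crossNum, crossNum, Multiset.map_map]
  exact sum_map_le_sum_map _ _ fun g _ => inv_addOrderOf_le_inv_addOrderOf_map φ g

theorem crossNum_le_crossNum_map_sub [Finite G] [Finite H] (φ : G →+ H) {p : ℕ}
    (hpH : p.Coprime (Nat.card H)) {g : G} (hg : g ∈ S) (hpg : p ∣ addOrderOf g) :
    crossNum S ≤ crossNum (S.map φ) - (1 - (p : ℝ)⁻¹) * (Nat.card H : ℝ)⁻¹ := by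
  obtain ⟨R, rfl⟩ := exists_cons_of_mem hg
  have hp := Nat.pos_of_dvd_of_pos hpg (addOrderOf_pos g)
  have hpos := addOrderOf_pos (φ g)
  have hdvd : p * addOrderOf (φ g) ∣ addOrderOf g :=
    (hpH.coprime_dvd_right (addOrderOf_dvd_natCard _)).mul_dvd_of_dvd_of_dvd hpg
      (addOrderOf_map_dvd φ g)
  have hle : (addOrderOf g : ℝ)⁻¹ ≤ (p : ℝ)⁻¹ * (addOrderOf (φ g) : ℝ)⁻¹ := by
    rw [← mul_inv]
    gcongr
    exact_mod_cast Nat.le_of_dvd (addOrderOf_pos g) hdvd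
  have hcard : (Nat.card H : ℝ)⁻¹ ≤ (addOrderOf (φ g) : ℝ)⁻¹ := by
    gcongr
    exact Nat.le_of_dvd Nat.card_pos (addOrderOf_dvd_natCard _)
  rw [map_cons, crossNum_cons, crossNum_cons]
  linarith [crossNum_le_crossNum_map φ R,
    mul_le_mul_of_nonneg_left hcard (sub_nonneg.mpr p.cast_inv_le_one)]

theorem crossNum_le_one_sub_inv_of_isZeroSumFree {p : ℕ} (hp : p ≠ 0)
    (hS : IsZeroSumFree S) (C : AddSubgroup G) (hC : Nat.card C = p) (hSC : ∀ g ∈ S, g ∈ C)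
    (hord : ∀ g ∈ S, addOrderOf g = p) : crossNum S ≤ 1 - (p : ℝ)⁻¹ := by
  have : Finite C := Nat.finite_of_card_ne_zero (hC ▸ hp)
  have hcard : (card S : ℝ) + 1 ≤ p := by exact_mod_cast hC ▸ hS.card_lt_natCard C hSC
  have hp0 : (p : ℝ) ≠ 0 := by exact_mod_cast hp
  calc crossNum S = card S * (p : ℝ)⁻¹ := crossNum_eq_card_mul_inv hord
    _ ≤ (p - 1) * (p : ℝ)⁻¹ := by gcongr; linarith
    _ = 1 - (p : ℝ)⁻¹ := by rw [sub_mul, mul_inv_cancel₀ hp0, one_mul]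

theorem exists_mem_dvd_addOrderOf_of_sum_mem_ker (φ : G →+ H) {p : ℕ}
    (hp : p.Prime) (hker : Nat.card φ.ker = p) (hpH : p.Coprime (Nat.card H))
    (hsum : S.sum ∈ φ.ker) (hsum0 : S.sum ≠ 0) : ∃ g ∈ S, p ∣ addOrderOf g := by
  by_contra! hndvd
  have nsmul_ker {x : G} (hx : x ∈ φ.ker) : p • x = 0 :=
    addOrderOf_dvd_iff_nsmul_eq_zero.mp (hker ▸ φ.ker.addOrderOf_dvd_natCard hx)
  have nsmul_mem {g : G} (hg : g ∈ S) : Nat.card H • g = 0 := by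
    have hmem : Nat.card H • g ∈ φ.ker := by
      rw [AddMonoidHom.mem_ker, _root_.map_nsmul, card_nsmul_eq_zero']
    rw [← addOrderOf_dvd_iff_nsmul_eq_zero]
    refine ((hp.coprime_iff_not_dvd.mpr (hndvd g hg)).symm).dvd_of_dvd_mul_left
      (addOrderOf_dvd_of_nsmul_eq_zero ?_)
    rw [mul_smul, nsmul_ker hmem]
  have nsmul_sum : Nat.card H • S.sum = 0 :=
    multiset_sum_mem (S := (nsmulAddMonoidHom (Nat.card H) : G →+ G).ker) S
      fun g hg => nsmul_mem hg
  refine hsum0 (AddMonoid.addOrderOf_eq_one_iff.mp (Nat.eq_one_of_dvd_coprimes hpH ?_ ?_))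
  · exact addOrderOf_dvd_of_nsmul_eq_zero (nsmul_ker hsum)
  · exact addOrderOf_dvd_of_nsmul_eq_zero nsmul_sum

theorem IsMinZeroSum.crossNum_le_of_card_ker [Finite G] [Finite H] (φ : G →+ H) {p : ℕ}
    (hp : p.Prime) (hker : Nat.card φ.ker = p) (hpH : p.Coprime (Nat.card H)) {B : ℝ}
    (hB : ∀ T : Multiset H, IsMinZeroSum T → crossNum T ≤ B) (hS : IsMinZeroSum (U + V))
    (hV0 : V ≠ 0) (hUker : ∀ g ∈ U, g ∈ φ.ker) (hUord : ∀ g ∈ U, addOrderOf g = p)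
    (hUcard : p ≤ card U + 1) :
    crossNum (U + V) ≤ B + (1 - (p : ℝ)⁻¹) * (1 - (Nat.card H : ℝ)⁻¹) := by
  have hU0 : U ≠ 0 := by
    rintro rfl
    exact absurd hUcard (by simpa using hp.one_lt)
  have hUfree : IsZeroSumFree U :=
    hS.isZeroSumFree_of_lt (lt_add_of_pos_right U (pos_iff_ne_zero.mpr hV0))
  have hVfree : IsZeroSumFree V :=
    hS.isZeroSumFree_of_lt (lt_add_of_pos_left V (pos_iff_ne_zero.mpr hU0))
  have hVmin : IsMinZeroSum (V.map φ) :=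
    hS.map_of_forall_mem_ker φ hV0 hUker fun a ha =>
      hUfree.exists_le_sum_eq φ.ker hUker (hker ▸ hUcard) ha
  have hVsum : V.sum ∈ φ.ker := by
    rw [AddMonoidHom.mem_ker, map_multiset_sum]
    exact hVmin.2.1
  obtain ⟨g, hgV, hpg⟩ := exists_mem_dvd_addOrderOf_of_sum_mem_ker φ hp hker hpH hVsum
    (hVfree V le_rfl hV0)
  have hVle := crossNum_le_crossNum_map_sub φ hpH hgV hpg
  have hUle := crossNum_le_one_sub_inv_of_isZeroSumFree hp.ne_zero hUfree φ.ker hker hUker hUord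
  rw [crossNum_add]
  linarith [hB _ hVmin]

end CrossNum

section Reduced

variable {G : Type*} [AddCommGroup G] {S : Multiset G}

/-- A sequence is order-reduced when every order `d ≠ 1` occurs in it fewer times than the smallest
prime factor of `d`. Over a cyclic group, replacing some elements of order `d` by their sum brings
every minimal zero-sum sequence to this form without decreasing its cross number. -/
def IsOrderReduced (S : Multiset G) : Prop :=
  ∀ d ≠ 1, (S.map addOrderOf).count d < d.minFac

theorem natCard_ker_nsmul_of_dvd [Finite G] [IsAddCyclic G] {p : ℕ} (hp : p ∣ Nat.card G) :
    Nat.card (nsmulAddMonoidHom p : G →+ G).ker = p := by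
  rw [IsAddCyclic.card_nsmulAddMonoidHom_ker, Nat.gcd_eq_right hp]

-- The multiples `e • g` of the elements of `S` all lie in the subgroup of order `p`.
theorem exists_le_addOrderOf_sum_dvd [Finite G] [IsAddCyclic G] {p e : ℕ} (hp : 1 < p)
    (hS : ∀ g ∈ S, addOrderOf g = p * e) (hcard : p ≤ card S) :
    ∃ T ≤ S, 1 < card T ∧ card T ≤ p ∧ addOrderOf T.sum ∣ e := by
  obtain ⟨g₀, hg₀⟩ := card_pos_iff_exists_mem.mp ((zero_lt_one.trans hp).trans_le hcard)
  have hker : Nat.card (nsmulAddMonoidHom p : G →+ G).ker = p :=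
    natCard_ker_nsmul_of_dvd ((dvd_mul_right p e).trans (hS g₀ hg₀ ▸ addOrderOf_dvd_natCard g₀))
  have he : 0 < e := Nat.pos_of_mul_pos_left (hS g₀ hg₀ ▸ addOrderOf_pos g₀)
  have hmem : ∀ g ∈ S, e • g ∈ (nsmulAddMonoidHom p : G →+ G).ker := fun g hg => by
    change p • e • g = 0
    rw [← mul_smul, ← addOrderOf_dvd_iff_nsmul_eq_zero, hS g hg]
  obtain ⟨T, hTS, hT0, hTcard, hTsum⟩ :=
    exists_le_sum_map_eq_zero (e • · : G → G) _ hmem (hker.trans_le hcard)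
  have hT1 : card T ≠ 1 := by
    intro h
    obtain ⟨g, rfl⟩ := card_eq_one.mp h
    have hdvd : p * e ∣ e := by
      rw [← hS g (singleton_le.mp hTS)]
      exact addOrderOf_dvd_of_nsmul_eq_zero (by simpa using hTsum)
    exact hp.not_ge (Nat.le_of_mul_le_mul_right (by simpa using Nat.le_of_dvd he hdvd) he)
  refine ⟨T, hTS, ?_, hTcard.trans_eq hker, addOrderOf_dvd_of_nsmul_eq_zero ?_⟩
  · have := card_pos.mpr hT0
    omega
  · rwa [Multiset.sum_map_nsmul, map_id'] at hTsum

theorem IsMinZeroSum.exists_card_lt_of_le_count [Finite G] [IsAddCyclic G]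
    (hS : IsMinZeroSum S) {p d : ℕ} (hp : 1 < p) (hpd : p ∣ d)
    (hcount : p ≤ (S.map addOrderOf).count d) :
    ∃ S' : Multiset G, IsMinZeroSum S' ∧ card S' < card S ∧ crossNum S ≤ crossNum S' := by
  obtain ⟨e, rfl⟩ := hpd
  have hord : ∀ g ∈ S.filter (p * e = addOrderOf ·), addOrderOf g = p * e := fun g hg =>
    (mem_filter.mp hg).2.symm
  obtain ⟨T, hTS, hT1, hTp, hsum⟩ :=
    exists_le_addOrderOf_sum_dvd hp hord (count_map addOrderOf S _ ▸ hcount)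
  have hT0 : T ≠ 0 := card_pos.mp (zero_lt_one.trans hT1)
  have hcross : crossNum T ≤ (addOrderOf T.sum : ℝ)⁻¹ := by
    obtain ⟨g, hg⟩ := exists_mem_of_ne_zero hT0
    have he : 0 < e := Nat.pos_of_mul_pos_left (hord g (mem_of_le hTS hg) ▸ addOrderOf_pos g)
    have hp0 : (p : ℝ) ≠ 0 := by exact_mod_cast (zero_lt_one.trans hp).ne'
    have := addOrderOf_pos T.sum
    calc crossNum T = card T * ((p * e : ℕ) : ℝ)⁻¹ :=
          crossNum_eq_card_mul_inv fun g hg => hord g (mem_of_le hTS hg)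
      _ ≤ p * ((p * e : ℕ) : ℝ)⁻¹ := by gcongr
      _ = (e : ℝ)⁻¹ := by rw [Nat.cast_mul, mul_inv, mul_inv_cancel_left₀ hp0]
      _ ≤ (addOrderOf T.sum : ℝ)⁻¹ := by gcongr; exact Nat.le_of_dvd he hsum
  obtain ⟨R, rfl⟩ := Multiset.le_iff_exists_add.mp (hTS.trans (filter_le _ _))
  refine ⟨T.sum ::ₘ R, hS.cons_sum hT0, ?_, ?_⟩
  · rw [card_cons, card_add]
    omega
  · rw [crossNum_add, crossNum_cons]
    gcongr

theorem IsMinZeroSum.exists_isOrderReduced [Finite G] [IsAddCyclic G] (hS : IsMinZeroSum S) :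
    ∃ S' : Multiset G, IsMinZeroSum S' ∧ IsOrderReduced S' ∧ crossNum S ≤ crossNum S' := by
  induction hn : card S using Nat.strong_induction_on generalizing S with
  | _ n ih =>
    by_cases hred : IsOrderReduced S
    · exact ⟨S, hS, hred, le_rfl⟩
    · simp only [IsOrderReduced, not_forall, not_lt] at hred
      obtain ⟨d, hd, hcount⟩ := hred
      obtain ⟨S₁, hS₁, hcard, hle⟩ :=
        hS.exists_card_lt_of_le_count (Nat.minFac_prime hd).one_lt d.minFac_dvd hcount
      obtain ⟨S', hS', hred', hle'⟩ := ih _ (hn ▸ hcard) hS₁ rfl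
      exact ⟨S', hS', hred', hle.trans hle'⟩

end Reduced

section Arithmetic

variable {n m p : ℕ}

/-- The value `∑_{p ∣ n} (1 - 1/p) + 1/n` of the classical lower bound `K*(G)` for the cross number
of a cyclic group `G` of squarefree order `n`. -/
noncomputable def bigKStar (n : ℕ) : ℝ :=
  ∑ p ∈ n.primeFactors, (1 - (p : ℝ)⁻¹) + (n : ℝ)⁻¹

/-- An upper bound for the cross number of an order-reduced sequence of nonzero elements of a group
of order `n`: each order `d` is allowed `minFac d - 1` occurrences. The term of `d = 1` vanishes
because `Nat.minFac 1 = 1`. -/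
noncomputable def reducedBound (n : ℕ) : ℝ :=
  ∑ d ∈ n.divisors, ((d.minFac : ℝ) - 1) * (d : ℝ)⁻¹

theorem bigKStar_add_sum_inv (n : ℕ) :
    bigKStar n + ∑ p ∈ n.primeFactors, (p : ℝ)⁻¹ = n.primeFactors.card + (n : ℝ)⁻¹ := by
  rw [bigKStar, Finset.sum_sub_distrib, Finset.sum_const, nsmul_one]
  ring

theorem primeFactors_prime_mul (hp : p.Prime) (hpm : p.Coprime m) :
    (p * m).primeFactors = insert p m.primeFactors := by
  rw [hpm.primeFactors_mul, hp.primeFactors, Finset.insert_eq]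

theorem card_primeFactors_prime_mul (hp : p.Prime) (hpm : p.Coprime m) :
    (p * m).primeFactors.card = m.primeFactors.card + 1 := by
  rw [primeFactors_prime_mul hp hpm, Finset.card_insert_of_notMem fun h =>
    hp.coprime_iff_not_dvd.mp hpm (Nat.dvd_of_mem_primeFactors h)]

theorem bigKStar_prime_mul (hp : p.Prime) (hpm : p.Coprime m) :
    bigKStar (p * m) = bigKStar m + (1 - (p : ℝ)⁻¹) * (1 - (m : ℝ)⁻¹) := by
  have hpm' : p ∉ m.primeFactors := fun h =>
    hp.coprime_iff_not_dvd.mp hpm (Nat.dvd_of_mem_primeFactors h)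
  rw [bigKStar, bigKStar, primeFactors_prime_mul hp hpm, Finset.sum_insert hpm', Nat.cast_mul,
    mul_inv]
  ring

theorem one_le_bigKStar (hn : Squarefree n) : 1 ≤ bigKStar n := by
  induction n using induction_on_primes with
  | zero => exact absurd hn not_squarefree_zero
  | one => simp [bigKStar]
  | prime_mul p m hp ih =>
    obtain ⟨hpm, -, hm⟩ := Nat.squarefree_mul_iff.mp hn
    rw [bigKStar_prime_mul hp hpm]
    exact le_add_of_le_of_nonneg (ih hm)
      (mul_nonneg (sub_nonneg.mpr p.cast_inv_le_one) (sub_nonneg.mpr m.cast_inv_le_one))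

theorem sum_divisors_prime_mul {M : Type*} [AddCommMonoid M] (hp : p.Prime) (hpm : p.Coprime m)
    (f : ℕ → M) :
    ∑ d ∈ (p * m).divisors, f d = ∑ d ∈ m.divisors, f d + ∑ d ∈ m.divisors, f (p * d) := by
  have hdisj : Disjoint m.divisors (m.divisors.image (p * ·)) := by
    refine Finset.disjoint_left.mpr fun d hd hd' => ?_
    obtain ⟨e, -, rfl⟩ := Finset.mem_image.mp hd'
    exact hp.coprime_iff_not_dvd.mp hpm (dvd_of_mul_right_dvd (Nat.dvd_of_mem_divisors hd))
  have hunion : (p * m).divisors = m.divisors ∪ m.divisors.image (p * ·) := by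
    ext d
    simp [Nat.divisors_mul, hp.divisors, Finset.mem_mul, eq_comm]
  rw [hunion, Finset.sum_union hdisj,
    Finset.sum_image fun a _ b _ h => Nat.eq_of_mul_eq_mul_left hp.pos h]

theorem sum_inv_divisors_prime_mul (hp : p.Prime) (hpm : p.Coprime m) :
    ∑ d ∈ (p * m).divisors, (d : ℝ)⁻¹ = (1 + (p : ℝ)⁻¹) * ∑ d ∈ m.divisors, (d : ℝ)⁻¹ := by
  rw [sum_divisors_prime_mul hp hpm]
  simp only [Nat.cast_mul, mul_inv, ← Finset.mul_sum]
  ring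

theorem minFac_prime_mul (hp : p.Prime) (hm : ∀ q, q.Prime → q ∣ m → p ≤ q) :
    (p * m).minFac = p := by
  refine le_antisymm (Nat.minFac_le_of_dvd hp.two_le (dvd_mul_right p m)) ?_
  have hprime : (p * m).minFac.Prime := Nat.minFac_prime (by simp [hp.ne_one])
  rcases hprime.dvd_mul.mp (Nat.minFac_dvd _) with h | h
  · exact ((Nat.prime_dvd_prime_iff_eq hprime hp).mp h).ge
  · exact hm _ hprime h

theorem coprime_of_forall_lt (hp : p.Prime) (hm : ∀ q, q.Prime → q ∣ m → p < q) :
    p.Coprime m :=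
  hp.coprime_iff_not_dvd.mpr fun h => (hm p hp h).false

theorem reducedBound_prime_mul (hp : p.Prime) (hm : ∀ q, q.Prime → q ∣ m → p < q) :
    reducedBound (p * m) =
      reducedBound m + (1 - (p : ℝ)⁻¹) * ∑ d ∈ m.divisors, (d : ℝ)⁻¹ := by
  have hpm : p.Coprime m := coprime_of_forall_lt hp hm
  have hp0 : (p : ℝ) ≠ 0 := by exact_mod_cast hp.ne_zero
  rw [reducedBound, reducedBound, sum_divisors_prime_mul hp hpm, Finset.mul_sum]
  congr 1
  refine Finset.sum_congr rfl fun d hd => ?_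
  have hd' : d ∣ m := Nat.dvd_of_mem_divisors hd
  rw [minFac_prime_mul hp fun q hq hqd => (hm q hq (hqd.trans hd')).le, Nat.cast_mul, mul_inv,
    ← mul_assoc, sub_mul, mul_inv_cancel₀ hp0, one_mul]

theorem exists_prime_mul_eq_of_squarefree (hn : Squarefree n) (h1 : n ≠ 1) :
    ∃ p m, p.Prime ∧ (∀ q, q.Prime → q ∣ m → p < q) ∧ Squarefree m ∧
      m.primeFactors.card + 1 = n.primeFactors.card ∧ p * m = n := by
  obtain ⟨m, hm⟩ := n.minFac_dvd
  have hp := Nat.minFac_prime h1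
  obtain ⟨hpm, -, hmsq⟩ := Nat.squarefree_mul_iff.mp (hm ▸ hn)
  refine ⟨n.minFac, m, hp, fun q hq hqm => ?_, hmsq, ?_, hm.symm⟩
  · have hqn : q ∣ n := hm ▸ hqm.mul_left n.minFac
    refine (Nat.minFac_le_of_dvd hq.two_le hqn).lt_of_ne ?_
    rintro rfl
    exact hp.coprime_iff_not_dvd.mp hpm hqm
  · rw [← card_primeFactors_prime_mul hp hpm, ← hm]

theorem sum_inv_divisors_prime (hp : p.Prime) : ∑ d ∈ p.divisors, (d : ℝ)⁻¹ = 1 + (p : ℝ)⁻¹ := by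
  rw [hp.sum_divisors, Nat.cast_one, inv_one, add_comm]

theorem reducedBound_one : reducedBound 1 = 0 := by
  simp [reducedBound]

theorem reducedBound_prime (hp : p.Prime) : reducedBound p = 1 - (p : ℝ)⁻¹ := by
  have h := reducedBound_prime_mul (m := 1) hp fun q hq h => absurd (Nat.dvd_one.mp h) hq.ne_one
  simpa [reducedBound_one] using h

theorem reducedBound_prime_mul_prime {q : ℕ} (hp : p.Prime) (hq : q.Prime) (hpq : p < q) :
    reducedBound (p * q) = 2 - (p : ℝ)⁻¹ * (1 + (q : ℝ)⁻¹) := by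
  have hlt : ∀ s, s.Prime → s ∣ q → p < s := fun s hs h =>
    ((Nat.prime_dvd_prime_iff_eq hs hq).mp h).symm ▸ hpq
  rw [reducedBound_prime_mul hp hlt, reducedBound_prime hq, sum_inv_divisors_prime hq]
  ring

theorem reducedBound_prime_mul_prime_mul_prime {q r : ℕ} (hp : p.Prime) (hq : q.Prime)
    (hr : r.Prime) (hpq : p < q) (hqr : q < r) :
    reducedBound (p * (q * r)) =
      3 + (r : ℝ)⁻¹ - (p : ℝ)⁻¹ * ((1 + (q : ℝ)⁻¹) * (1 + (r : ℝ)⁻¹)) := by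
  have hlt : ∀ s, s.Prime → s ∣ q * r → p < s := fun s hs h =>
    (hs.dvd_mul.mp h).elim
      (fun h => ((Nat.prime_dvd_prime_iff_eq hs hq).mp h).symm ▸ hpq)
      (fun h => ((Nat.prime_dvd_prime_iff_eq hs hr).mp h).symm ▸ hpq.trans hqr)
  rw [reducedBound_prime_mul hp hlt, reducedBound_prime_mul_prime hq hr hqr,
    sum_inv_divisors_prime_mul hq ((Nat.coprime_primes hq hr).mpr hqr.ne),
    sum_inv_divisors_prime hr]
  ring

theorem eq_prime_mul_of_card_primeFactors_le_three (hn : Squarefree n)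
    (hω : n.primeFactors.card ≤ 3) :
    n = 1 ∨ n.Prime ∨ (∃ p q, p.Prime ∧ q.Prime ∧ p < q ∧ n = p * q) ∨
      ∃ p q r, p.Prime ∧ q.Prime ∧ r.Prime ∧ p < q ∧ q < r ∧ n = p * (q * r) := by
  rcases eq_or_ne n 1 with h1 | h1
  · exact .inl h1
  obtain ⟨p, m, hp, hpm, hm, hpω, rfl⟩ := exists_prime_mul_eq_of_squarefree hn h1
  rcases eq_or_ne m 1 with rfl | h1
  · exact .inr (.inl (by rwa [mul_one]))
  obtain ⟨q, k, hq, hqk, hk, hqω, rfl⟩ := exists_prime_mul_eq_of_squarefree hm h1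
  have hpq : p < q := hpm q hq (dvd_mul_right q k)
  rcases eq_or_ne k 1 with rfl | h1
  · exact .inr (.inr (.inl ⟨p, q, hp, hq, hpq, by rw [mul_one]⟩))
  obtain ⟨r, l, hr, -, hl, hrω, rfl⟩ := exists_prime_mul_eq_of_squarefree hk h1
  have hqr : q < r := hqk r hr (dvd_mul_right r l)
  obtain rfl : l = 1 := by
    by_contra h1
    obtain ⟨s, t, -, -, -, hsω, -⟩ := exists_prime_mul_eq_of_squarefree hl h1
    omega
  exact .inr (.inr (.inr ⟨p, q, r, hp, hq, hr, hpq, hqr, by rw [mul_one]⟩))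

theorem reducedBound_le_of_card_primeFactors_le_three (hn : Squarefree n)
    (hω : n.primeFactors.card ≤ 3) :
    reducedBound n ≤ n.primeFactors.card + (n : ℝ)⁻¹ := by
  have hn0 : 0 ≤ (n : ℝ)⁻¹ := by positivity
  rcases eq_prime_mul_of_card_primeFactors_le_three hn hω with
    rfl | hp | ⟨p, q, hp, hq, hpq, rfl⟩ | ⟨p, q, r, hp, hq, hr, hpq, hqr, rfl⟩
  · simp [reducedBound_one]
  · rw [reducedBound_prime hp, hp.primeFactors, Finset.card_singleton, Nat.cast_one]
    linarith
  · have hpq' : 0 ≤ (p : ℝ)⁻¹ * (1 + (q : ℝ)⁻¹) := by positivity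
    rw [reducedBound_prime_mul_prime hp hq hpq,
      card_primeFactors_prime_mul hp ((Nat.coprime_primes hp hq).mpr hpq.ne), hq.primeFactors,
      Finset.card_singleton]
    push_cast at hn0 ⊢
    linarith
  · have hqr' : q.Coprime r := (Nat.coprime_primes hq hr).mpr hqr.ne
    have hpqr : p.Coprime (q * r) := ((Nat.coprime_primes hp hq).mpr hpq.ne).mul_right
      ((Nat.coprime_primes hp hr).mpr (hpq.trans hqr).ne)
    have hrp : (r : ℝ)⁻¹ ≤ (p : ℝ)⁻¹ := by
      have := hp.pos
      have := hpq.trans hqr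
      gcongr
    have hle : (r : ℝ)⁻¹ ≤ (p : ℝ)⁻¹ * ((1 + (q : ℝ)⁻¹) * (1 + (r : ℝ)⁻¹)) := by
      refine hrp.trans (le_mul_of_one_le_right (by positivity)
        (one_le_mul_of_one_le_of_one_le ?_ ?_)) <;> exact le_add_of_nonneg_right (by positivity)
    rw [reducedBound_prime_mul_prime_mul_prime hp hq hr hpq hqr,
      card_primeFactors_prime_mul hp hpqr, card_primeFactors_prime_mul hq hqr', hr.primeFactors,
      Finset.card_singleton]
    push_cast at hn0 ⊢
    linarith

end Arithmetic

section Bounds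

variable {G : Type*} [AddCommGroup G] {S : Multiset G}

theorem IsOrderReduced.crossNum_le_reducedBound_sub [Finite G] (hS : IsOrderReduced S)
    (h0 : (0 : G) ∉ S)
    (hlt : ∀ p ∈ (Nat.card G).primeFactors, (S.map addOrderOf).count p + 1 < p) :
    crossNum S ≤ reducedBound (Nat.card G) - ∑ p ∈ (Nat.card G).primeFactors, (p : ℝ)⁻¹ := by
  rw [le_sub_iff_add_le, crossNum_eq_sum_divisors, reducedBound,
    Nat.primeFactors_eq_to_filter_divisors_prime, Finset.sum_filter, ← Finset.sum_add_distrib]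
  refine Finset.sum_le_sum fun d hd => ?_
  have hcount : ((S.map addOrderOf).count d : ℝ) + (if d.Prime then 1 else 0) ≤ d.minFac - 1 := by
    rw [le_sub_iff_add_le]
    split_ifs with hdp
    · have := hlt d (Nat.mem_primeFactors.mpr ⟨hdp, Nat.dvd_of_mem_divisors hd, Nat.card_pos.ne'⟩)
      rw [hdp.minFac_eq]
      exact_mod_cast this
    · rcases eq_or_ne d 1 with rfl | h1
      · have : (S.map addOrderOf).count 1 = 0 := count_eq_zero.mpr (by simpa using h0)
        simp [this]
      · rw [add_zero]
        exact_mod_cast hS d h1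
  calc ((S.map addOrderOf).count d : ℝ) * (d : ℝ)⁻¹ + (if d.Prime then (d : ℝ)⁻¹ else 0)
      = ((S.map addOrderOf).count d + (if d.Prime then 1 else 0)) * (d : ℝ)⁻¹ := by
        rw [add_mul, ite_mul, one_mul, zero_mul]
    _ ≤ _ := by gcongr

theorem natCard_quotient_ker_nsmul [Finite G] [IsAddCyclic G] {p m : ℕ}
    (hG : Nat.card G = p * m) : Nat.card (G ⧸ (nsmulAddMonoidHom p : G →+ G).ker) = m := by
  have hcard := (nsmulAddMonoidHom p : G →+ G).ker.card_eq_card_quotient_mul_card_addSubgroup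
  rw [natCard_ker_nsmul_of_dvd (hG ▸ dvd_mul_right p m), hG, mul_comm] at hcard
  exact (Nat.eq_of_mul_eq_mul_right (Nat.pos_of_mul_pos_right (hG ▸ Nat.card_pos)) hcard).symm

theorem IsMinZeroSum.crossNum_le_of_le_count_add_one [Finite G] [IsAddCyclic G] {p m : ℕ}
    (hp : p.Prime) (hpm : p.Coprime m) (hG : Nat.card G = p * m) {B : ℝ}
    (hB : ∀ T : Multiset (G ⧸ (nsmulAddMonoidHom p : G →+ G).ker),
      IsMinZeroSum T → crossNum T ≤ B)
    (hS : IsMinZeroSum S) (hcount : p ≤ (S.map addOrderOf).count p + 1) :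
    crossNum S ≤ B + (1 - (p : ℝ)⁻¹) * (1 - (m : ℝ)⁻¹) := by
  set C := (nsmulAddMonoidHom p : G →+ G).ker
  have hC : Nat.card C = p := natCard_ker_nsmul_of_dvd (hG ▸ dvd_mul_right p m)
  have hGC : Nat.card (G ⧸ C) = m := natCard_quotient_ker_nsmul hG
  have hmemC {g : G} (hg : addOrderOf g = p) : g ∈ C :=
    addOrderOf_dvd_iff_nsmul_eq_zero.mp hg.dvd
  set U := S.filter (p = addOrderOf ·)
  set V := S.filter (¬ p = addOrderOf ·)
  have hUV : U + V = S := filter_add_not _ S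
  have hUord : ∀ g ∈ U, addOrderOf g = p := fun g hg => (mem_filter.mp hg).2.symm
  rw [count_map] at hcount
  rw [← hUV] at hS ⊢
  rcases eq_or_ne V 0 with hV | hV
  · rw [hV, add_zero] at hS ⊢
    have hcard : card U ≤ p :=
      hC ▸ hS.card_le_natCard C fun g hg => hmemC (hUord g hg)
    have hU : crossNum U ≤ 1 := by
      rw [crossNum_eq_card_mul_inv hUord]
      exact mul_inv_le_one_of_le₀ (by exact_mod_cast hcard) (by positivity)
    have hB1 : 1 ≤ B := by
      simpa [crossNum_singleton_zero] using hB {0} isMinZeroSum_singleton_zero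
    exact le_add_of_le_of_nonneg (hU.trans hB1)
      (mul_nonneg (sub_nonneg.mpr p.cast_inv_le_one) (sub_nonneg.mpr m.cast_inv_le_one))
  · have hker : (QuotientAddGroup.mk' C).ker = C := QuotientAddGroup.ker_mk' C
    have := hS.crossNum_le_of_card_ker (QuotientAddGroup.mk' C) hp (by rw [hker, hC])
      (by rwa [hGC]) hB hV (fun g hg => by rw [hker]; exact hmemC (hUord g hg)) hUord hcount
    rwa [hGC] at this

theorem IsMinZeroSum.crossNum_le_bigKStar [Finite G] [IsAddCyclic G]
    (hsq : Squarefree (Nat.card G))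
    (hbound : ∀ m, m ∣ Nat.card G → reducedBound m ≤ m.primeFactors.card + (m : ℝ)⁻¹)
    (hS : IsMinZeroSum S) : crossNum S ≤ bigKStar (Nat.card G) := by
  induction hn : Nat.card G using Nat.strong_induction_on generalizing G with
  | _ n ih =>
  subst hn
  obtain ⟨S', hS', hred, hle⟩ := hS.exists_isOrderReduced
  refine hle.trans ?_
  by_cases h0 : (0 : G) ∈ S'
  · rw [hS'.eq_singleton_of_zero_mem h0, crossNum_singleton_zero]
    exact one_le_bigKStar hsq
  by_cases hlt : ∀ p ∈ (Nat.card G).primeFactors, (S'.map addOrderOf).count p + 1 < p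
  · have hcross := hred.crossNum_le_reducedBound_sub h0 hlt
    linarith [hbound _ dvd_rfl, bigKStar_add_sum_inv (Nat.card G)]
  · push Not at hlt
    obtain ⟨p, hp, hcount⟩ := hlt
    obtain ⟨hp, ⟨m, hm⟩, -⟩ := Nat.mem_primeFactors.mp hp
    obtain ⟨hpm, -, hmsq⟩ := Nat.squarefree_mul_iff.mp (hm ▸ hsq)
    rw [hm, bigKStar_prime_mul hp hpm]
    refine hS'.crossNum_le_of_le_count_add_one hp hpm hm (fun T hT => ?_) hcount
    have hcard := natCard_quotient_ker_nsmul hm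
    have := isAddCyclic_of_surjective
      (QuotientAddGroup.mk' (nsmulAddMonoidHom p : G →+ G).ker) (QuotientAddGroup.mk'_surjective _)
    have hlt : m < Nat.card G :=
      hm ▸ lt_mul_of_one_lt_left (Nat.pos_of_ne_zero hmsq.ne_zero) hp.one_lt
    have hmG : m ∣ Nat.card G := hm ▸ dvd_mul_left m p
    exact ih m hlt (by rwa [hcard]) (by rw [hcard]; exact fun k hk => hbound k (hk.trans hmG)) hT
      hcard

theorem exists_isMinZeroSum_bigKStar_le_crossNum (G : Type*) [AddCommGroup G] [Finite G] :
    ∃ S : Multiset G, IsMinZeroSum S ∧ bigKStar (Nat.card G) ≤ crossNum S := by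
  have exists_order (p : ℕ) : ∃ g : G, p ∈ (Nat.card G).primeFactors → addOrderOf g = p := by
    by_cases hp : p ∈ (Nat.card G).primeFactors
    · have := Fact.mk (Nat.prime_of_mem_primeFactors hp)
      obtain ⟨g, hg⟩ := exists_prime_addOrderOf_dvd_card' p (Nat.dvd_of_mem_primeFactors hp)
      exact ⟨g, fun _ => hg⟩
    · exact ⟨0, fun h => absurd h hp⟩
  choose e he using exists_order
  set S := ∑ p ∈ (Nat.card G).primeFactors, replicate (addOrderOf (e p) - 1) (e p)
  have hS : IsZeroSumFree S := isZeroSumFree_sum_replicate (fun p _ => (addOrderOf_pos _).ne')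
    fun p hp q hq hpq => by
      beta_reduce
      rw [he p hp, he q hq]
      exact (Nat.coprime_primes (Nat.prime_of_mem_primeFactors hp)
        (Nat.prime_of_mem_primeFactors hq)).mpr hpq
  refine ⟨-S.sum ::ₘ S, hS.isMinZeroSum_cons_neg_sum, ?_⟩
  have hcross : crossNum S = ∑ p ∈ (Nat.card G).primeFactors, (1 - (p : ℝ)⁻¹) := by
    rw [crossNum_sum]
    refine Finset.sum_congr rfl fun p hp => ?_
    have hp' := Nat.prime_of_mem_primeFactors hp
    have hp0 : (p : ℝ) ≠ 0 := by exact_mod_cast hp'.ne_zero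
    rw [crossNum_eq_card_mul_inv fun g hg => by rw [eq_of_mem_replicate hg, he p hp],
      card_replicate, he p hp, Nat.cast_sub hp'.one_le, sub_mul, mul_inv_cancel₀ hp0,
      Nat.cast_one, one_mul]
  rw [crossNum_cons, hcross, bigKStar, add_comm]
  gcongr
  · exact_mod_cast addOrderOf_pos _
  · exact Nat.le_of_dvd Nat.card_pos (addOrderOf_dvd_natCard _)

theorem bigK_eq_bigKStar [Finite G] [IsAddCyclic G] (hsq : Squarefree (Nat.card G))
    (hbound : ∀ m, m ∣ Nat.card G → reducedBound m ≤ m.primeFactors.card + (m : ℝ)⁻¹) :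
    bigK G = bigKStar (Nat.card G) := by
  obtain ⟨S, hS, hle⟩ := exists_isMinZeroSum_bigKStar_le_crossNum G
  refine IsGreatest.csSup_eq ⟨⟨S, hS, (hS.crossNum_le_bigKStar hsq hbound).antisymm hle⟩, ?_⟩
  rintro _ ⟨T, hT, rfl⟩
  exact hT.crossNum_le_bigKStar hsq hbound

theorem isAddCyclic_of_squarefree_natCard [Finite G] (hsq : Squarefree (Nat.card G)) :
    IsAddCyclic G := by
  have : IsZGroup (Multiplicative G) := .of_squarefree (G := Multiplicative G) hsq
  rw [← isCyclic_multiplicative_iff]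
  infer_instance

end Bounds

theorem bigK_zmod_prod_three_primes_general {G : Type*} [AddCommGroup G] [Finite G]
    (hsq : Squarefree (Nat.card G)) (hω : (Nat.card G).primeFactors.card ≤ 3) :
    bigK G = ∑ p ∈ (Nat.card G).primeFactors, (1 - (p : ℝ)⁻¹) + (Nat.card G : ℝ)⁻¹ := by
  have := isAddCyclic_of_squarefree_natCard hsq
  refine bigK_eq_bigKStar hsq fun m hm => ?_
  exact reducedBound_le_of_card_primeFactors_le_three (hsq.squarefree_of_dvd hm)
    ((Finset.card_le_card (Nat.primeFactors_mono hm hsq.ne_zero)).trans hω)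

/-- For distinct primes `p, q, r`:
`K(C_p ⊕ C_q ⊕ C_r) = 3 - 1/p - 1/q - 1/r + 1/(pqr)`. -/
theorem bigK_zmod_prod_three_primes
    (p q r : ℕ) (hp : p.Prime) (hq : q.Prime) (hr : r.Prime)
    (hpq : p ≠ q) (hpr : p ≠ r) (hqr : q ≠ r) :
    bigK (ZMod p × ZMod q × ZMod r)
      = 3 - (p : ℝ)⁻¹ - (q : ℝ)⁻¹ - (r : ℝ)⁻¹ + ((p : ℝ) * q * r)⁻¹ := by
  have : NeZero p := ⟨hp.ne_zero⟩
  have : NeZero q := ⟨hq.ne_zero⟩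
  have : NeZero r := ⟨hr.ne_zero⟩
  have hqr' : q.Coprime r := (Nat.coprime_primes hq hr).mpr hqr
  have hpqr : p.Coprime (q * r) :=
    ((Nat.coprime_primes hp hq).mpr hpq).mul_right ((Nat.coprime_primes hp hr).mpr hpr)
  have hcard : Nat.card (ZMod p × ZMod q × ZMod r) = p * (q * r) := by simp
  have hsq : Squarefree (p * (q * r)) :=
    Nat.squarefree_mul_iff.mpr ⟨hpqr, hp.prime.squarefree,
      Nat.squarefree_mul_iff.mpr ⟨hqr', hq.prime.squarefree, hr.prime.squarefree⟩⟩
  have hfactors : (p * (q * r)).primeFactors = {p, q, r} := by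
    rw [primeFactors_prime_mul hp hpqr, primeFactors_prime_mul hq hqr', hr.primeFactors]
  rw [bigK_zmod_prod_three_primes_general (hcard ▸ hsq)
    (by rw [hcard, hfactors]; exact Finset.card_le_three), hcard, hfactors,
    Finset.sum_insert (by simp [hpq, hpr]), Finset.sum_pair hqr]
  push_cast
  ring
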